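/- In Cl_{2n}(q,c) the element z_0 = ∑_{k=0}^n (-1)^k (∏_{l=1}^k (q^{2l-2}+q^{-2l+2})/(q(q+q^{-1})c²)) ∑_{J: ℓ(J)=k} q^{2L(J)-k(2n-k+1)} γ_1^{j_1}⋯γ_n^{j_n}γ_{n+1}^{j_n}⋯γ_{2n}^{j_1} satisfies z_0 γ_i = -γ_i z_0 for all i = 1,…,2n, and z_0² = 1. Here J = (j_1,…,j_n) ranges over {0,1}^n, ℓ(J) = ∑ j_k, L(J) = ∑ k·j_k. -/

import Mathlib

noncomputable section

namespace FRT

/-- The "dual" index `i' = N+1-i` (0-indexed: `N-1-i`). -/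
def dual {N : ℕ} (i : Fin N) : Fin N := ⟨N - 1 - i.val, by have := i.2; omega⟩

/-- Generators of the free algebra. -/
def gen {N : ℕ} (i : Fin N) : FreeAlgebra ℂ (Fin N) := FreeAlgebra.ι ℂ i

/-- The sum `∑_{k<i} q^{2k-2i+2} γ_k γ_{k'}` appearing in the defining relations. -/
def pairSum (N : ℕ) (q : ℂ) (i : Fin N) : FreeAlgebra ℂ (Fin N) :=
  ∑ k ∈ Finset.Iio i, (q ^ (2 * (k.val : ℤ) - 2 * (i.val : ℤ) + 2)) • (gen k * gen (dual k))

/-- The defining relations of the FRT–Clifford algebra `Cl_N(q,c)`. -/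
inductive Rel (N : ℕ) (q c : ℂ) : FreeAlgebra ℂ (Fin N) → FreeAlgebra ℂ (Fin N) → Prop
  | sq (i : Fin N) (h : 2 * i.val + 1 ≠ N) : Rel N q c (gen i * gen i) 0
  | swap (i j : Fin N) (hlt : i < j) (h : i.val + j.val + 1 ≠ N) :
      Rel N q c (gen j * gen i) ((-(q ^ 2)) • (gen i * gen j))
  | pair (i : Fin N) (h : 2 * i.val + 1 < N) :
      Rel N q c (gen (dual i) * gen i)
        (-(gen i * gen (dual i)) + (q ^ 2 - q⁻¹ ^ 2) • pairSum N q i +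
          algebraMap ℂ _ (c ^ 2 * q ^ ((N : ℤ) - 2 * (i.val : ℤ) - 1) * (q + q⁻¹)))
  | middle (i : Fin N) (h : 2 * i.val + 1 = N) :
      Rel N q c (gen i * gen i) ((q - q⁻¹) • pairSum N q i + algebraMap ℂ _ (c ^ 2))

/-- The FRT–Clifford algebra `Cl_N(q,c)`. -/
abbrev Cl (N : ℕ) (q c : ℂ) := RingQuot (Rel N q c)

/-- The generators `γ_i` of `Cl_N(q,c)`. -/
def γ (N : ℕ) (q c : ℂ) (i : Fin N) : Cl N q c :=
  RingQuot.mkAlgHom ℂ (Rel N q c) (gen i)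

/-- Ordered product `γ_1 γ_2 ⋯ γ_m` of the first `m` generators. -/
def prodFirst (N : ℕ) (q c : ℂ) (m : ℕ) : Cl N q c :=
  (((List.finRange N).take m).map (γ N q c)).prod

/-- Ordered product `γ_{m+1} γ_{m+2} ⋯ γ_N` (0-indexed: indices `m,…,N-1`). -/
def prodFrom (N : ℕ) (q c : ℂ) (m : ℕ) : Cl N q c :=
  (((List.finRange N).drop m).map (γ N q c)).prod

/-- The ordered monomial `γ_1^{i_1} ⋯ γ_N^{i_N}` for `i ∈ {0,1}^N`. -/
def monoB (N : ℕ) (q c : ℂ) (f : Fin N → Bool) : Cl N q c :=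
  ((List.finRange N).map (fun i => if f i then γ N q c i else 1)).prod

/-- The ordered monomial `γ_1^{i_1} ⋯ γ_n^{i_n}` for `i ∈ {0,1}^n`, `n ≤ N`. -/
def monoLow (N : ℕ) (q c : ℂ) {n : ℕ} (h : n ≤ N) (f : Fin n → Bool) : Cl N q c :=
  ((List.finRange n).map (fun j => if f j then γ N q c (Fin.castLE h j) else 1)).prod

/-- `z` is homogeneous of `∂_i`-degree `0`: it is fixed by every algebra endomorphism
rescaling `γ_i` by `t` and `γ_{i'}` by `t⁻¹`. -/
def DegZeroAt (N : ℕ) (q c : ℂ) (i : ℕ) (z : Cl N q c) : Prop :=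
  ∀ t : ℂ, t ≠ 0 → ∀ f : Cl N q c →ₐ[ℂ] Cl N q c,
    (∀ j : Fin N, f (γ N q c j) =
      (if j.val = i then t else if j.val + i + 1 = N then t⁻¹ else 1) • γ N q c j) →
    f z = z

/-- For `m : Fin 2n`, the index `k ∈ Fin n` with `m ∈ {k, k'}`. -/
def lowEven (n : ℕ) (m : Fin (2 * n)) : Fin n :=
  ⟨min m.val (2 * n - 1 - m.val), by have := m.2; omega⟩

/-- `ℓ(J) = ∑ j_k`. -/
def ellJ (n : ℕ) (J : Fin n → Bool) : ℕ :=
  (Finset.univ.filter (fun l => J l = true)).card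

/-- `L(J) = ∑ k·j_k` (1-indexed `k`). -/
def LJ (n : ℕ) (J : Fin n → Bool) : ℕ :=
  ∑ l : Fin n, if J l then l.val + 1 else 0

/-- The monomial `γ_1^{j_1}⋯γ_n^{j_n}γ_{n+1}^{j_n}⋯γ_{2n}^{j_1}`. -/
def monoPair (n : ℕ) (q c : ℂ) (J : Fin n → Bool) : Cl (2 * n) q c :=
  ((List.finRange (2 * n)).map
    (fun m => if J (lowEven n m) then γ (2 * n) q c m else 1)).prod

/-- The element `z_0` of `Cl_{2n}(q,c)`. -/
def zZero (n : ℕ) (q c : ℂ) : Cl (2 * n) q c :=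
  ∑ J : Fin n → Bool,
    ((-1 : ℂ) ^ (ellJ n J) *
      (∏ l ∈ Finset.range (ellJ n J),
        ((q ^ (2 * (l : ℤ)) + q ^ (-(2 * (l : ℤ)))) / (q * (q + q⁻¹) * c ^ 2))) *
      q ^ (2 * (LJ n J : ℤ) - (ellJ n J : ℤ) * (2 * (n : ℤ) - (ellJ n J : ℤ) + 1))) •
    monoPair n q c J

/-!
Rescale `γ_i γ_{i'}` to `X_i` and put `p = q⁴`. The relations say that the `X_i` commute and satisfy
`X_i² = U_i X_i` with `U_i = 1 + (p - 1) ∑_{j<i} X_j`. By induction every `U_i` is invertible: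
`e_i = U_i⁻¹ X_i` is idempotent and `U_{i+1} = U_i (1 + (p - 1) e_i)`. The `e_i` commute, and
`z_0` is the product of the involutions `1 - 2 e_i`, whence `z_0² = 1`. Since `γ_i` and `γ_{i'}`
commute with every `e_j` for `j ≠ i`, while `e_i γ_i = γ_i`, `γ_i e_i = 0`, `e_i γ_{i'} = 0` and
`γ_{i'} e_i = γ_{i'}`, the factor `1 - 2 e_i` makes `z_0` anticommute with both of them.

The product formula for `z_0` follows by induction on `n` from the fact that multiplying a sum of
ordered monomials, weighted by degree, by `U_n` only changes the weights.
-/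

section ListProducts

variable {A : Type*} [Ring A] {f : ℕ → A}

lemma prod_range_mul_self (hsq : ∀ i, f i * f i = 1) (hcomm : ∀ i j, Commute (f i) (f j)) (m : ℕ) :
    ((List.range m).map f).prod * ((List.range m).map f).prod = 1 := by
  induction m with
  | zero => simp
  | succ m ih =>
    have hm : Commute (f m) ((List.range m).map f).prod :=
      Commute.list_prod_right _ _ (by simpa using fun i _ => hcomm m i)
    rw [List.range_succ, List.map_append, List.prod_append, List.map_singleton,
      List.prod_singleton, hm.mul_mul_mul_comm, ih, hsq, one_mul]

lemma prod_range_mul_eq_neg {a : A} {i m : ℕ} (him : i < m) (hcomm : ∀ j ≠ i, Commute (f j) a)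
    (hanti : f i * a = -(a * f i)) :
    ((List.range m).map f).prod * a = -(a * ((List.range m).map f).prod) := by
  have hbelow : Commute ((List.range i).map f).prod a :=
    Commute.list_prod_left _ _ (by simpa using fun j hj => hcomm j hj.ne)
  induction m, him using Nat.le_induction with
  | base =>
    rw [List.range_succ, List.map_append, List.prod_append, List.map_singleton,
      List.prod_singleton, mul_assoc, hanti, mul_neg, ← mul_assoc, hbelow.eq, mul_assoc]
  | succ m him ih =>
    rw [List.range_succ, List.map_append, List.prod_append, List.map_singleton,
      List.prod_singleton, mul_assoc, (hcomm m (by omega)).eq, ← mul_assoc, ih, neg_mul,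
      mul_assoc]

end ListProducts

section QIdempotents

variable {R A : Type*} [CommRing R] [Ring A] [Algebra R A] {p : R} {X : ℕ → A}

/-- The partial sums `U_m = 1 + (p - 1) ∑_{j<m} X_j` of a sequence; for the rescaled products
`X_j ∝ γ_j γ_{j'}` they govern how `X_m` multiplies with itself and with the generators. -/
def partialSum (p : R) (X : ℕ → A) (m : ℕ) : A := 1 + (p - 1) • ∑ j ∈ Finset.range m, X j

lemma partialSum_succ (m : ℕ) : partialSum p X (m + 1) = partialSum p X m + (p - 1) • X m := by
  rw [partialSum, partialSum, Finset.sum_range_succ, smul_add, add_assoc]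

lemma commute_partialSum {a : A} {m : ℕ} (h : ∀ j < m, Commute (X j) a) :
    Commute (partialSum p X m) a :=
  (Commute.one_left a).add_left
    ((Commute.sum_left _ _ _ fun j hj => h j (Finset.mem_range.1 hj)).smul_left _)

lemma partialSum_mul_eq_smul {a : A} {t : R} {i m : ℕ} (him : i ≤ m)
    (hi : partialSum p X i * a = t • (a * partialSum p X i))
    (h : ∀ j, i ≤ j → X j * a = t • (a * X j)) :
    partialSum p X m * a = t • (a * partialSum p X m) := by
  induction m, him using Nat.le_induction with
  | base => exact hi
  | succ m him ih =>
    rw [partialSum_succ, add_mul, mul_add, smul_mul_assoc, mul_smul_comm, ih, h m him, smul_add,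
      smul_comm t]

/-- A `p`-deformation of a sequence of commuting idempotents: the factor `partialSum p X i`, which
is `1` when `p = 1`, turns `X i * X i = X i` into `X i * X i = partialSum p X i * X i`. -/
structure IsQIdempotentSeq (p : R) (X : ℕ → A) : Prop where
  commute (i j : ℕ) : Commute (X i) (X j)
  mul_self (i : ℕ) : X i * X i = partialSum p X i * X i

lemma commute_inverse_mul {u x a : A} {t : R} (hu : IsUnit u) (hua : u * a = t • (a * u))
    (hxa : x * a = t • (a * x)) : Commute (Ring.inverse u * x) a := by
  calc Ring.inverse u * x * a = Ring.inverse u * (t • (a * u)) * (Ring.inverse u * x) := by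
        rw [mul_assoc, hxa, mul_smul_comm, mul_smul_comm, smul_mul_assoc, mul_assoc _ (a * u),
          mul_assoc a, Ring.mul_inverse_cancel_left _ _ hu]
    _ = a * (Ring.inverse u * x) := by rw [← hua, Ring.inverse_mul_cancel_left _ _ hu]

/-- The idempotents `e_i = U_i⁻¹ X_i` underlying a `p`-deformed family `X`. -/
def idem (p : R) (X : ℕ → A) (i : ℕ) : A := Ring.inverse (partialSum p X i) * X i

lemma partialSum_mul_idem {i : ℕ} (hU : IsUnit (partialSum p X i)) :
    partialSum p X i * idem p X i = X i :=
  Ring.mul_inverse_cancel_left _ _ hU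

lemma IsQIdempotentSeq.isIdempotentElem_idem (hX : IsQIdempotentSeq p X) {i : ℕ}
    (hU : IsUnit (partialSum p X i)) : IsIdempotentElem (idem p X i) := by
  have hXe : Commute (idem p X i) (X i) :=
    commute_inverse_mul (t := (1 : R)) hU
      (by rw [one_smul, (commute_partialSum fun j _ => hX.commute j i).eq]) (one_smul R _).symm
  calc idem p X i * idem p X i = Ring.inverse (partialSum p X i) * (idem p X i * X i) := by
        rw [hXe.eq, ← mul_assoc, ← idem]
    _ = Ring.inverse (partialSum p X i) * (Ring.inverse (partialSum p X i) * (X i * X i)) := by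
        rw [idem, mul_assoc]
    _ = idem p X i := by rw [hX.mul_self, Ring.inverse_mul_cancel_left _ _ hU, idem]

lemma isUnit_one_add_smul_of_isIdempotentElem {e : A} (he : IsIdempotentElem e) (hp : IsUnit p) :
    IsUnit (1 + (p - 1) • e) := by
  obtain ⟨u, rfl⟩ := hp
  have key (r s : R) (hrs : r * s = 1) : (1 + (r - 1) • e) * (1 + (s - 1) • e) = 1 := by
    have hcoeff : (r - 1) + (s - 1) + (r - 1) * (s - 1) = 0 := by linear_combination hrs
    calc (1 + (r - 1) • e) * (1 + (s - 1) • e)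
        = 1 + ((r - 1) + (s - 1) + (r - 1) * (s - 1)) • e := by
          rw [add_mul, mul_add, mul_add, smul_mul_smul_comm, he.eq]
          simp only [one_mul, mul_one, add_smul]
          abel
      _ = 1 := by rw [hcoeff, zero_smul, add_zero]
  exact isUnit_iff_exists.2 ⟨1 + ((↑u⁻¹ : R) - 1) • e, key _ _ u.mul_inv, key _ _ u.inv_mul⟩

namespace IsQIdempotentSeq

lemma isUnit_partialSum (hX : IsQIdempotentSeq p X) (hp : IsUnit p) (m : ℕ) :
    IsUnit (partialSum p X m) := by
  induction m with
  | zero => simp [partialSum]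
  | succ m ih =>
    have hsucc : partialSum p X (m + 1) = partialSum p X m * (1 + (p - 1) • idem p X m) := by
      rw [partialSum_succ, mul_add, mul_one, mul_smul_comm, partialSum_mul_idem ih]
    rw [hsucc]
    exact ih.mul (isUnit_one_add_smul_of_isIdempotentElem (hX.isIdempotentElem_idem ih) hp)

lemma commute_idem (hX : IsQIdempotentSeq p X) (hp : IsUnit p) {a : A} {i : ℕ}
    (h : ∀ j ≤ i, Commute (X j) a) : Commute (idem p X i) a :=
  commute_inverse_mul (t := (1 : R)) (hX.isUnit_partialSum hp i)
    (by rw [one_smul, (commute_partialSum fun j hj => h j hj.le).eq])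
    (by rw [one_smul, (h i le_rfl).eq])

lemma commute_idem_idem (hX : IsQIdempotentSeq p X) (hp : IsUnit p) (i j : ℕ) :
    Commute (idem p X i) (idem p X j) :=
  hX.commute_idem hp fun k _ => (hX.commute_idem hp fun l _ => hX.commute l k).symm

lemma commute_idem_of_ne (hX : IsQIdempotentSeq p X) (hp : IsUnit p) {a : A} {t : R} {i : ℕ}
    (hlt : ∀ j < i, Commute (X j) a) (hgt : ∀ j, i < j → X j * a = t • (a * X j))
    (hi : partialSum p X (i + 1) * a = t • (a * partialSum p X (i + 1))) {j : ℕ} (hj : j ≠ i) :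
    Commute (idem p X j) a := by
  rcases lt_or_gt_of_ne hj with hji | hij
  · exact hX.commute_idem hp fun k hk => hlt k (hk.trans_lt hji)
  · exact commute_inverse_mul (hX.isUnit_partialSum hp j)
      (partialSum_mul_eq_smul hij hi fun k hk => hgt k hk) (hgt j hij)

end IsQIdempotentSeq

/-- The product of the commuting involutions `1 - 2 e_i` with `i < m`; this is the shape in which
`z_0` is studied. -/
def signProd (p : R) (X : ℕ → A) (m : ℕ) : A :=
  ((List.range m).map fun i => 1 - 2 * idem p X i).prod

lemma signProd_succ (m : ℕ) :
    signProd p X (m + 1) = signProd p X m * (1 - 2 * idem p X m) := by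
  simp [signProd, List.range_succ]

namespace IsQIdempotentSeq

lemma signProd_mul_self (hX : IsQIdempotentSeq p X) (hp : IsUnit p) (m : ℕ) :
    signProd p X m * signProd p X m = 1 := by
  refine prod_range_mul_self (fun i => ?_) (fun i j => ?_) m
  · have he := (hX.isIdempotentElem_idem (hX.isUnit_partialSum hp i)).eq
    calc (1 - 2 * idem p X i) * (1 - 2 * idem p X i)
        = 1 + 4 * (idem p X i * idem p X i - idem p X i) := by noncomm_ring
      _ = 1 := by rw [he, sub_self, mul_zero, add_zero]
  · exact ((Commute.one_right _).sub_right ((Commute.ofNat_right _ 2).mul_right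
      ((Commute.one_left _).sub_left ((Commute.ofNat_left 2 _).mul_left
        (hX.commute_idem_idem hp i j)))))

lemma signProd_mul_eq_neg (hX : IsQIdempotentSeq p X) (hp : IsUnit p) {a : A} {t : R} {i m : ℕ}
    (him : i < m) (hlt : ∀ j < i, Commute (X j) a)
    (hgt : ∀ j, i < j → X j * a = t • (a * X j))
    (hi : partialSum p X (i + 1) * a = t • (a * partialSum p X (i + 1)))
    (hea : idem p X i * a + a * idem p X i = a) :
    signProd p X m * a = -(a * signProd p X m) := by
  refine prod_range_mul_eq_neg him (fun j hj => ?_) ?_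
  · exact (Commute.one_left a).sub_left
      ((Commute.ofNat_left 2 a).mul_left (hX.commute_idem_of_ne hp hlt hgt hi hj))
  · calc (1 - 2 * idem p X i) * a
        = -(a * (1 - 2 * idem p X i)) + 2 * (a - (idem p X i * a + a * idem p X i)) := by
          noncomm_ring
      _ = -(a * (1 - 2 * idem p X i)) := by rw [hea, sub_self, mul_zero, add_zero]

lemma signProd_mul_eq_neg_of_left (hX : IsQIdempotentSeq p X) (hp : IsUnit p) {a : A} {i m : ℕ}
    (him : i < m) (hlt : ∀ j < i, Commute (X j) a)
    (hgt : ∀ j, i < j → X j * a = p • (a * X j))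
    (haX : a * X i = 0) (hXa : X i * a = partialSum p X i * a) :
    signProd p X m * a = -(a * signProd p X m) := by
  have hU := hX.isUnit_partialSum hp i
  have hUa : Commute (partialSum p X i) a := commute_partialSum hlt
  refine hX.signProd_mul_eq_neg hp him hlt hgt ?_ ?_
  · rw [partialSum_succ, add_mul, mul_add, smul_mul_assoc, mul_smul_comm, haX, hXa, hUa.eq]
    module
  · have hUe : partialSum p X i * (a * idem p X i) = 0 := by
      rw [← mul_assoc, hUa.eq, mul_assoc, partialSum_mul_idem hU, haX]
    rw [(hU.mul_right_eq_zero).1 hUe, add_zero, idem, mul_assoc, hXa,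
      Ring.inverse_mul_cancel_left _ _ hU]

lemma signProd_mul_eq_neg_of_right (hX : IsQIdempotentSeq p X) (hp : IsUnit p) {b : A} {i m : ℕ}
    (him : i < m) (hlt : ∀ j < i, Commute (X j) b)
    (hgt : ∀ j, i < j → b * X j = p • (X j * b))
    (hXb : X i * b = 0) (hbX : b * X i = partialSum p X i * b) :
    signProd p X m * b = -(b * signProd p X m) := by
  have hU := hX.isUnit_partialSum hp i
  have hUb : Commute (partialSum p X i) b := commute_partialSum hlt
  refine hX.signProd_mul_eq_neg hp (t := Ring.inverse p) him hlt (fun j hj => ?_) ?_ ?_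
  · rw [hgt j hj, smul_smul, Ring.inverse_mul_cancel _ hp, one_smul]
  · have hUb' : b * partialSum p X (i + 1) = p • (partialSum p X (i + 1) * b) := by
      rw [partialSum_succ, add_mul, mul_add, smul_mul_assoc, mul_smul_comm, hXb, hbX, hUb.eq]
      module
    rw [hUb', smul_smul, Ring.inverse_mul_cancel _ hp, one_smul]
  · have hUe : partialSum p X i * (b * idem p X i) = partialSum p X i * b := by
      rw [← mul_assoc, hUb.eq, mul_assoc, partialSum_mul_idem hU, hbX, hUb.eq]
    rw [hU.mul_left_cancel hUe, idem, mul_assoc, hXb, mul_zero, zero_add]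

end IsQIdempotentSeq

end QIdempotents

section SubsetSums

lemma ellJ_snoc (m : ℕ) (J : Fin m → Bool) (b : Bool) :
    ellJ (m + 1) (Fin.snoc J b : Fin (m + 1) → Bool) = ellJ m J + if b then 1 else 0 := by
  simp only [ellJ, Finset.card_filter, Fin.sum_univ_castSucc, Fin.snoc_castSucc, Fin.snoc_last]

lemma sum_snoc_bool {M : Type*} [AddCommMonoid M] {m : ℕ} (f : (Fin (m + 1) → Bool) → M) :
    ∑ J, f J = ∑ J : Fin m → Bool, f (Fin.snoc J false) +
      ∑ J : Fin m → Bool, f (Fin.snoc J true) := by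
  rw [← (Fin.snocEquiv fun _ => Bool).sum_comp, Fintype.sum_prod_type, Fintype.sum_bool, add_comm]
  rfl

section Selected

variable {A : Type*} [One A]

/-- The factors of the ordered monomial `X_0^{j_0} ⋯ X_{m-1}^{j_{m-1}}`, kept as a list so that the
monomial can also be read backwards. -/
def selected (X : ℕ → A) {m : ℕ} (J : Fin m → Bool) : List A :=
  List.ofFn fun i => if J i then X i else 1

lemma selected_snoc (X : ℕ → A) {m : ℕ} (J : Fin m → Bool) (b : Bool) :
    selected X (Fin.snoc J b : Fin (m + 1) → Bool) = selected X J ++ [if b then X m else 1] := by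
  rw [selected, List.ofFn_succ', List.concat_eq_append]
  simp [selected]

end Selected

section WeightedSum

variable {R A : Type*} [CommRing R] [Ring A] [Algebra R A] {p : R} {X : ℕ → A}

/-- The sum of all ordered monomials in `X_0, …, X_{m-1}`, those of degree `k` having weight
`w k`; linear in the weight `w`. -/
def weightedSum (X : ℕ → A) (m : ℕ) : (ℕ → R) →ₗ[R] A :=
  ∑ J : Fin m → Bool, (LinearMap.proj (ellJ m J)).smulRight (selected X J).prod

lemma weightedSum_apply (m : ℕ) (w : ℕ → R) :
    weightedSum X m w = ∑ J : Fin m → Bool, w (ellJ m J) • (selected X J).prod := by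
  simp [weightedSum]

lemma weightedSum_zero (w : ℕ → R) : weightedSum X 0 w = w 0 • (1 : A) := by
  simp [weightedSum_apply, selected, ellJ]

lemma weightedSum_succ (m : ℕ) (w : ℕ → R) :
    weightedSum X (m + 1) w = weightedSum X m w + weightedSum X m (fun k => w (k + 1)) * X m := by
  simp [weightedSum_apply, sum_snoc_bool, selected_snoc, ellJ_snoc, Finset.sum_mul]

lemma IsQIdempotentSeq.mul_partialSum_succ (hX : IsQIdempotentSeq p X) (m : ℕ) :
    X m * partialSum p X (m + 1) = p • (partialSum p X m * X m) := by
  rw [partialSum_succ, mul_add, mul_smul_comm, hX.mul_self,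
    ← (commute_partialSum fun j _ => hX.commute j m).eq]
  module

-- At `k = 0` the truncated `k - 1` is harmless, its coefficient `p ^ 0 - 1` being zero.
lemma IsQIdempotentSeq.weightedSum_mul_partialSum (hX : IsQIdempotentSeq p X) (m : ℕ)
    (w : ℕ → R) :
    weightedSum X m w * partialSum p X m =
      weightedSum X m fun k => p ^ k * w k + (p ^ k - 1) * w (k - 1) := by
  induction m generalizing w with
  | zero => simp [weightedSum_zero, partialSum]
  | succ m ih =>
    have hshift : (fun k => p ^ (k + 1) * w (k + 1) + (p ^ (k + 1) - 1) * w (k + 1 - 1)) =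
        (p - 1) • w + p • fun k => p ^ k * w (k + 1) + (p ^ k - 1) * w (k - 1 + 1) := by
      ext k
      cases k <;> simp only [Pi.add_apply, Pi.smul_apply, smul_eq_mul, Nat.add_sub_cancel] <;> ring
    calc weightedSum X (m + 1) w * partialSum p X (m + 1)
        = weightedSum X m w * partialSum p X m + (p - 1) • (weightedSum X m w * X m) +
          p • (weightedSum X m (fun k => w (k + 1)) * partialSum p X m * X m) := by
          rw [weightedSum_succ, add_mul, mul_assoc _ (X m), hX.mul_partialSum_succ,
            partialSum_succ, mul_add, mul_smul_comm, mul_smul_comm, mul_assoc _ _ (X m)]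
      _ = weightedSum X (m + 1) fun k => p ^ k * w k + (p ^ k - 1) * w (k - 1) := by
          rw [ih, ih, weightedSum_succ, hshift, map_add, map_smul, map_smul, add_mul,
            smul_mul_assoc, smul_mul_assoc, add_assoc]

end WeightedSum

section SignWeight

variable {K A : Type*} [Field K] [Ring A] [Algebra K A] {p : K} {X : ℕ → A}

/-- The weight of the degree `k` monomials in the expansion of `signProd p X m`. -/
def signWeight (p : K) (k : ℕ) : K := (-1) ^ k * ∏ l ∈ Finset.range k, (1 + (p ^ l)⁻¹)

lemma signWeight_succ (k : ℕ) : signWeight p (k + 1) = -(1 + (p ^ k)⁻¹) * signWeight p k := by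
  rw [signWeight, signWeight, Finset.prod_range_succ, pow_succ]
  ring

lemma pow_mul_signWeight_add (hp : p ≠ 0) (k : ℕ) :
    p ^ k * signWeight p (k + 1) + (p ^ k - 1) * signWeight p (k - 1 + 1) =
      -2 * signWeight p k := by
  cases k with
  | zero =>
    rw [signWeight_succ, pow_zero, inv_one]
    ring
  | succ k =>
    rw [Nat.add_sub_cancel, signWeight_succ (k + 1)]
    field_simp
    ring

lemma IsQIdempotentSeq.weightedSum_signWeight (hX : IsQIdempotentSeq p X) (hp : p ≠ 0) (m : ℕ) :
    weightedSum X m (signWeight p) = signProd p X m := by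
  induction m with
  | zero => simp [weightedSum_zero, signWeight, signProd]
  | succ m ih =>
    have hshift : weightedSum X m (fun k => signWeight p (k + 1)) * partialSum p X m =
        (-2 : K) • weightedSum X m (signWeight p) := by
      rw [hX.weightedSum_mul_partialSum, ← map_smul]
      exact congrArg _ (funext (pow_mul_signWeight_add hp))
    rw [weightedSum_succ, ← partialSum_mul_idem (hX.isUnit_partialSum hp.isUnit m), ← mul_assoc,
      hshift, ih, signProd_succ, mul_sub, mul_one, two_mul, mul_add, smul_mul_assoc]
    module

end SignWeight

section PairProducts

variable {R A : Type*} [CommRing R] [Ring A] [Algebra R A]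

lemma mul_left_eq_smul {x y z : A} {s t : R} (hy : y * x = s • (x * y))
    (hz : z * x = t • (x * z)) : y * z * x = (s * t) • (x * (y * z)) := by
  rw [mul_assoc, hz, mul_smul_comm, ← mul_assoc, hy, smul_mul_assoc, smul_smul, mul_assoc,
    mul_comm t]

lemma mul_right_eq_smul {x y z : A} {s t : R} (hy : x * y = s • (y * x))
    (hz : x * z = t • (z * x)) : x * (y * z) = (s * t) • (y * z * x) := by
  rw [← mul_assoc, hy, smul_mul_assoc, mul_assoc, hz, mul_smul_comm, smul_smul, mul_assoc]

lemma commute_mul_of_eq_smul {x y z : A} {t : R} (hy : x * y = t • (y * x))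
    (hz : z * x = t • (x * z)) : Commute (y * z) x := by
  rw [commute_iff_eq, mul_assoc, hz, mul_smul_comm, ← mul_assoc, ← mul_assoc, hy, smul_mul_assoc]

lemma prod_reverse_selected_mul {b : ℕ → A} {x : A} {t : R} {m : ℕ}
    (h : ∀ j < m, b j * x = t • (x * b j)) (J : Fin m → Bool) :
    (selected b J).reverse.prod * x = t ^ ellJ m J • (x * (selected b J).reverse.prod) := by
  induction J using Fin.snocInduction with
  | elim0 => simp [selected, ellJ]
  | @snoc m J β ih =>
    specialize ih fun j hj => h j (by omega)
    cases β with
    | false => simpa [selected_snoc, ellJ_snoc] using ih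
    | true =>
      simpa [selected_snoc, ellJ_snoc, pow_succ'] using mul_left_eq_smul (h m (by omega)) ih

-- The factor `t` is what it costs to move `X i` leftwards past one of the `b j` with `j < i`.
lemma prod_selected_eq_smul {a b X : ℕ → A} {κ : ℕ → R} {t : R}
    (hX : ∀ i, X i = κ i • (a i * b i)) (hbX : ∀ i, ∀ j < i, b j * X i = t • (X i * b j)) {m : ℕ}
    (J : Fin m → Bool) :
    (selected X J).prod = ((∏ i, if J i then κ i else 1) * t ^ (ellJ m J).choose 2) •
      ((selected a J).prod * (selected b J).reverse.prod) := by
  induction J using Fin.snocInduction with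
  | elim0 => simp [selected, ellJ]
  | @snoc m J β ih =>
    cases β with
    | false => simpa [selected_snoc, ellJ_snoc, Fin.prod_univ_castSucc] using ih
    | true =>
      have hmove := prod_reverse_selected_mul (hbX m) J
      simp only [selected_snoc, ellJ_snoc, Fin.prod_univ_castSucc, Fin.snoc_castSucc, Fin.snoc_last,
        List.prod_append, List.prod_cons, List.prod_nil, mul_one, List.reverse_append,
        List.reverse_singleton, List.singleton_append, if_true, Fin.val_castSucc, Fin.val_last]
      rw [ih, smul_mul_assoc, mul_assoc, hmove, hX, Nat.choose_succ_succ' _ 1,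
        Nat.choose_one_right, pow_add]
      simp only [mul_smul_comm, smul_mul_assoc, smul_smul, mul_assoc]
      congr 1
      ring

end PairProducts

end SubsetSums

section Generators

variable {N : ℕ} {q c : ℂ}

lemma γ_mul_self {i : Fin N} (h : 2 * i.val + 1 ≠ N) : γ N q c i * γ N q c i = 0 := by
  simpa only [γ, map_mul, map_zero] using
    RingQuot.mkAlgHom_rel ℂ (Rel.sq (q := q) (c := c) i h)

lemma γ_mul_γ_of_lt {i j : Fin N} (hij : i < j) (h : i.val + j.val + 1 ≠ N) :
    γ N q c j * γ N q c i = (-q ^ 2) • (γ N q c i * γ N q c j) := by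
  simpa only [γ, map_mul, map_smul] using
    RingQuot.mkAlgHom_rel ℂ (Rel.swap (q := q) (c := c) i j hij h)

lemma γ_dual_mul_γ {i : Fin N} (h : 2 * i.val + 1 < N) :
    γ N q c (dual i) * γ N q c i = -(γ N q c i * γ N q c (dual i)) +
      (q ^ 2 - q⁻¹ ^ 2) • ∑ k ∈ Finset.Iio i,
        q ^ (2 * (k.val : ℤ) - 2 * (i.val : ℤ) + 2) • (γ N q c k * γ N q c (dual k)) +
      algebraMap ℂ _ (c ^ 2 * q ^ ((N : ℤ) - 2 * (i.val : ℤ) - 1) * (q + q⁻¹)) := by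
  simpa only [γ, pairSum, map_mul, map_add, map_neg, map_smul, map_sum, AlgHom.commutes] using
    RingQuot.mkAlgHom_rel ℂ (Rel.pair (q := q) (c := c) i h)

end Generators

section Pairs

variable {n : ℕ} {q c : ℂ}

/-- The generators `γ_1, …, γ_n`, indexed from `0` and extended by `0` to all of `ℕ`, which
preserves the homogeneous relations. -/
def lowGen (n : ℕ) (q c : ℂ) (i : ℕ) : Cl (2 * n) q c :=
  if h : i < n then γ (2 * n) q c ⟨i, by omega⟩ else 0

/-- The duals `γ_{1'}, …, γ_{n'}` of the generators `lowGen`, with the same index conventions. -/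
def highGen (n : ℕ) (q c : ℂ) (i : ℕ) : Cl (2 * n) q c :=
  if h : i < n then γ (2 * n) q c (dual ⟨i, by omega⟩) else 0

lemma γ_eq_lowGen {i : Fin (2 * n)} (hi : i.val < n) : γ (2 * n) q c i = lowGen n q c i := by
  rw [lowGen, dif_pos hi]

lemma γ_eq_highGen {i : Fin (2 * n)} (hi : n ≤ i.val) :
    γ (2 * n) q c i = highGen n q c (2 * n - 1 - i) := by
  rw [highGen, dif_pos (by omega)]
  congr 1
  ext
  simp only [dual]
  omega

lemma lowGen_mul_self (i : ℕ) : lowGen n q c i * lowGen n q c i = 0 := by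
  by_cases hi : i < n
  · simpa only [lowGen, dif_pos hi] using γ_mul_self (by simp only; omega)
  · simp only [lowGen, dif_neg hi, mul_zero]

lemma highGen_mul_self (i : ℕ) : highGen n q c i * highGen n q c i = 0 := by
  by_cases hi : i < n
  · simpa only [highGen, dif_pos hi] using γ_mul_self (by simp only [dual]; omega)
  · simp only [highGen, dif_neg hi, mul_zero]

lemma lowGen_mul_lowGen {i j : ℕ} (hij : i < j) :
    lowGen n q c j * lowGen n q c i = (-q ^ 2) • (lowGen n q c i * lowGen n q c j) := by
  by_cases hj : j < n
  · simpa only [lowGen, dif_pos hj, dif_pos (hij.trans hj)] using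
      γ_mul_γ_of_lt (by simpa using hij) (by simp only; omega)
  · simp only [lowGen, dif_neg hj, zero_mul, mul_zero, smul_zero]

lemma highGen_mul_highGen {i j : ℕ} (hij : i < j) :
    highGen n q c i * highGen n q c j = (-q ^ 2) • (highGen n q c j * highGen n q c i) := by
  by_cases hj : j < n
  · simpa only [highGen, dif_pos hj, dif_pos (hij.trans hj)] using
      γ_mul_γ_of_lt (by simp only [dual, Fin.lt_def]; omega) (by simp only [dual]; omega)
  · simp only [highGen, dif_neg hj, zero_mul, mul_zero, smul_zero]

lemma highGen_mul_lowGen_of_ne {i j : ℕ} (hij : i ≠ j) :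
    highGen n q c j * lowGen n q c i = (-q ^ 2) • (lowGen n q c i * highGen n q c j) := by
  by_cases hi : i < n
  · by_cases hj : j < n
    · simpa only [lowGen, highGen, dif_pos hi, dif_pos hj] using
        γ_mul_γ_of_lt (by simp only [dual, Fin.lt_def]; omega) (by simp only [dual]; omega)
    · simp only [highGen, dif_neg hj, zero_mul, mul_zero, smul_zero]
  · simp only [lowGen, dif_neg hi, zero_mul, mul_zero, smul_zero]

lemma highGen_mul_lowGen {i : ℕ} (hi : i < n) :
    highGen n q c i * lowGen n q c i = -(lowGen n q c i * highGen n q c i) +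
      (q ^ 2 - q⁻¹ ^ 2) • ∑ k ∈ Finset.range i,
        q ^ (2 * (k : ℤ) - 2 * (i : ℤ) + 2) • (lowGen n q c k * highGen n q c k) +
      algebraMap ℂ _ (c ^ 2 * q ^ (2 * (n : ℤ) - 2 * (i : ℤ) - 1) * (q + q⁻¹)) := by
  have hsum : ∑ k ∈ Finset.Iio (⟨i, by omega⟩ : Fin (2 * n)),
      q ^ (2 * (k.val : ℤ) - 2 * (i : ℤ) + 2) • (γ (2 * n) q c k * γ (2 * n) q c (dual k)) =
      ∑ k ∈ Finset.range i,
        q ^ (2 * (k : ℤ) - 2 * (i : ℤ) + 2) • (lowGen n q c k * highGen n q c k) := by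
    rw [← Nat.Iio_eq_range, ← Fin.map_valEmbedding_Iio (⟨i, by omega⟩ : Fin (2 * n)),
      Finset.sum_map]
    refine Finset.sum_congr rfl fun k hk => ?_
    have hkn : k.val < n := (Fin.lt_def.1 (Finset.mem_Iio.1 hk)).trans hi
    simp only [Fin.valEmbedding_apply, lowGen, highGen, dif_pos hkn]
  rw [← hsum]
  simpa only [lowGen, highGen, dif_pos hi, Nat.cast_mul, Nat.cast_ofNat] using
    γ_dual_mul_γ (q := q) (c := c) (i := (⟨i, by omega⟩ : Fin (2 * n))) (by simp only; omega)

/-- The scalar by which `γ_i γ_{i'}` is rescaled so that `pairProd n q c` becomes a `q⁴`-deformed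
sequence of idempotents; it cancels the constant term of the relation between `γ_i` and `γ_{i'}`. -/
def pairScale (n : ℕ) (q c : ℂ) (i : ℕ) : ℂ :=
  q ^ (2 * (i + 1)) / (q * (q + q⁻¹) * c ^ 2 * q ^ (2 * n))

/-- The rescaled product `X_i` of `γ_i` and `γ_{i'}`. -/
def pairProd (n : ℕ) (q c : ℂ) (i : ℕ) : Cl (2 * n) q c :=
  pairScale n q c i • (lowGen n q c i * highGen n q c i)

lemma pairProd_of_le {i : ℕ} (hi : n ≤ i) : pairProd n q c i = 0 := by
  rw [pairProd, lowGen, dif_neg hi.not_gt, zero_mul, smul_zero]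

lemma commute_pairProd_lowGen {i j : ℕ} (hji : j < i) :
    Commute (pairProd n q c j) (lowGen n q c i) :=
  (commute_mul_of_eq_smul (lowGen_mul_lowGen hji) (highGen_mul_lowGen_of_ne hji.ne')).smul_left _

lemma commute_pairProd_highGen {i j : ℕ} (hji : j < i) :
    Commute (pairProd n q c j) (highGen n q c i) :=
  (commute_mul_of_eq_smul (highGen_mul_lowGen_of_ne hji.ne) (highGen_mul_highGen hji)).smul_left _

lemma pairProd_mul_lowGen_of_lt {i j : ℕ} (hij : i < j) :
    pairProd n q c j * lowGen n q c i = q ^ 4 • (lowGen n q c i * pairProd n q c j) := by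
  rw [pairProd, smul_mul_assoc, mul_smul_comm, smul_comm,
    mul_left_eq_smul (lowGen_mul_lowGen hij) (highGen_mul_lowGen_of_ne hij.ne)]
  module

lemma highGen_mul_pairProd_of_lt {i j : ℕ} (hij : i < j) :
    highGen n q c i * pairProd n q c j = q ^ 4 • (pairProd n q c j * highGen n q c i) := by
  rw [pairProd, smul_mul_assoc, mul_smul_comm, smul_comm,
    mul_right_eq_smul (highGen_mul_lowGen_of_ne hij.ne') (highGen_mul_highGen hij)]
  module

lemma lowGen_mul_pairProd (i : ℕ) : lowGen n q c i * pairProd n q c i = 0 := by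
  rw [pairProd, mul_smul_comm, ← mul_assoc, lowGen_mul_self, zero_mul, smul_zero]

lemma pairProd_mul_highGen (i : ℕ) : pairProd n q c i * highGen n q c i = 0 := by
  rw [pairProd, smul_mul_assoc, mul_assoc, highGen_mul_self, mul_zero, smul_zero]

lemma pairScale_mul_pairSum_coeff (hq : q ≠ 0) (i k : ℕ) :
    pairScale n q c i * ((q ^ 2 - q⁻¹ ^ 2) * q ^ (2 * (k : ℤ) - 2 * (i : ℤ) + 2)) =
      (q ^ 4 - 1) * pairScale n q c k := by
  simp only [pairScale, zpow_add₀ hq, zpow_sub₀ hq, zpow_mul, zpow_natCast, zpow_ofNat, pow_mul,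
    pow_succ]
  field_simp

lemma pairScale_mul_const (hq : q ≠ 0) (hq' : q + q⁻¹ ≠ 0) (hc : c ≠ 0) (i : ℕ) :
    pairScale n q c i * (c ^ 2 * q ^ (2 * (n : ℤ) - 2 * (i : ℤ) - 1) * (q + q⁻¹)) = 1 := by
  simp only [pairScale, zpow_sub₀ hq, zpow_mul, zpow_natCast, zpow_ofNat, pow_mul, pow_succ]
  generalize q + q⁻¹ = s at hq' ⊢
  field_simp

lemma smul_highGen_mul_lowGen (hq : q ≠ 0) (hq' : q + q⁻¹ ≠ 0) (hc : c ≠ 0) {i : ℕ}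
    (hi : i < n) :
    pairScale n q c i • (highGen n q c i * lowGen n q c i) =
      partialSum (q ^ 4) (pairProd n q c) i - pairProd n q c i := by
  rw [highGen_mul_lowGen hi, Algebra.algebraMap_eq_smul_one, smul_add, smul_add, smul_neg,
    ← pairProd, smul_smul, smul_smul, pairScale_mul_const hq hq' hc, one_smul, partialSum,
    Finset.smul_sum, Finset.smul_sum]
  simp only [pairProd, smul_smul, mul_assoc, pairScale_mul_pairSum_coeff hq]
  abel

lemma pairProd_mul_lowGen (hq : q ≠ 0) (hq' : q + q⁻¹ ≠ 0) (hc : c ≠ 0) {i : ℕ} (hi : i < n) :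
    pairProd n q c i * lowGen n q c i =
      partialSum (q ^ 4) (pairProd n q c) i * lowGen n q c i := by
  rw [eq_comm, ← sub_eq_zero, ← sub_mul, ← smul_highGen_mul_lowGen hq hq' hc hi, smul_mul_assoc,
    mul_assoc, lowGen_mul_self, mul_zero, smul_zero]

lemma highGen_mul_pairProd (hq : q ≠ 0) (hq' : q + q⁻¹ ≠ 0) (hc : c ≠ 0) {i : ℕ} (hi : i < n) :
    highGen n q c i * pairProd n q c i =
      partialSum (q ^ 4) (pairProd n q c) i * highGen n q c i := by
  rw [(commute_partialSum fun j hj => commute_pairProd_highGen hj).eq, eq_comm, ← sub_eq_zero,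
    ← mul_sub, ← smul_highGen_mul_lowGen hq hq' hc hi, mul_smul_comm, ← mul_assoc,
    highGen_mul_self, zero_mul, smul_zero]

lemma isQIdempotentSeq_pairProd (hq : q ≠ 0) (hq' : q + q⁻¹ ≠ 0) (hc : c ≠ 0) :
    IsQIdempotentSeq (q ^ 4) (pairProd n q c) where
  commute i j := by
    have hlt {i j : ℕ} (hij : i < j) : Commute (pairProd n q c i) (pairProd n q c j) :=
      ((commute_pairProd_lowGen hij).mul_right (commute_pairProd_highGen hij)).smul_right _
    rcases lt_trichotomy i j with h | rfl | h
    · exact hlt h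
    · exact Commute.refl _
    · exact (hlt h).symm
  mul_self i := by
    by_cases hi : i < n
    · calc pairProd n q c i * pairProd n q c i
          = pairScale n q c i • (pairProd n q c i * lowGen n q c i * highGen n q c i) := by
            rw [mul_assoc, ← mul_smul_comm, ← pairProd]
        _ = partialSum (q ^ 4) (pairProd n q c) i * pairProd n q c i := by
            rw [pairProd_mul_lowGen hq hq' hc hi, mul_assoc, ← mul_smul_comm, ← pairProd]
    · rw [pairProd_of_le (not_lt.1 hi), mul_zero, mul_zero]

end Pairs

section Expansion

variable {n : ℕ} {q c : ℂ}

lemma monoPair_eq_prod_selected (J : Fin n → Bool) :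
    monoPair n q c J =
      (selected (lowGen n q c) J).prod * (selected (highGen n q c) J).reverse.prod := by
  rw [monoPair, ← List.prod_append]
  congr 1
  refine List.ext_getElem (by simp [selected, two_mul]) fun m hm _ => ?_
  have hm : m < 2 * n := by simpa using hm
  rcases lt_or_ge m n with h | h
  · have hlow : lowEven n ⟨m, hm⟩ = ⟨m, h⟩ := by
      ext; simp only [lowEven]; omega
    rw [List.getElem_append_left (by simpa [selected] using h)]
    simp [selected, hlow, lowGen]
  · have hidx : 2 * n - 1 - m = n - 1 - (m - n) := by omega
    have hhigh : lowEven n ⟨m, hm⟩ = ⟨n - 1 - (m - n), by omega⟩ := by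
      ext; simp only [lowEven]; omega
    have hγ := γ_eq_highGen (q := q) (c := c) (i := ⟨m, hm⟩) h
    rw [List.getElem_append_right (by simpa [selected] using h)]
    simp [selected, hhigh, hγ, hidx]

lemma prod_pairScale (J : Fin n → Bool) :
    (∏ i : Fin n, if J i then pairScale n q c i else 1) =
      q ^ (2 * LJ n J) * (q * (q + q⁻¹) * c ^ 2 * q ^ (2 * n))⁻¹ ^ ellJ n J := by
  rw [LJ, ellJ, Finset.card_filter, Finset.mul_sum, ← Finset.prod_pow_eq_pow_sum,
    ← Finset.prod_pow_eq_pow_sum, ← Finset.prod_mul_distrib]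
  refine Finset.prod_congr rfl fun i _ => ?_
  cases J i <;> simp [pairScale, div_eq_mul_inv]

lemma prod_div_mul_zpow (hq : q ≠ 0) (D : ℂ) (k : ℕ) :
    (∏ l ∈ Finset.range k, ((q ^ (2 * (l : ℤ)) + q ^ (-(2 * (l : ℤ)))) / D)) *
        q ^ (-((k : ℤ) * (2 * (n : ℤ) - (k : ℤ) + 1))) =
      (∏ l ∈ Finset.range k, (1 + ((q ^ 4) ^ l)⁻¹)) *
        ((D * q ^ (2 * n))⁻¹ ^ k * (q ^ 4) ^ k.choose 2) := by
  induction k with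
  | zero => simp
  | succ k ih =>
    have hexp : q ^ (-(((k + 1 : ℕ) : ℤ) * (2 * (n : ℤ) - ((k + 1 : ℕ) : ℤ) + 1))) =
        q ^ (-((k : ℤ) * (2 * (n : ℤ) - (k : ℤ) + 1))) *
          (q ^ (2 * k) * (q ^ (2 * n))⁻¹) := by
      rw [← zpow_natCast, ← zpow_natCast, ← zpow_neg, ← zpow_add₀ hq, ← zpow_add₀ hq]
      congr 1
      push_cast
      ring
    have hfactor : (q ^ (2 * (k : ℤ)) + q ^ (-(2 * (k : ℤ)))) * q ^ (2 * k) =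
        (1 + ((q ^ 4) ^ k)⁻¹) * (q ^ 4) ^ k := by
      rw [zpow_neg]
      norm_cast
      field_simp
      ring
    calc _ = (∏ l ∈ Finset.range k, ((q ^ (2 * (l : ℤ)) + q ^ (-(2 * (l : ℤ)))) / D)) *
          q ^ (-((k : ℤ) * (2 * (n : ℤ) - (k : ℤ) + 1))) *
          ((q ^ (2 * (k : ℤ)) + q ^ (-(2 * (k : ℤ)))) * q ^ (2 * k)) * (D * q ^ (2 * n))⁻¹ := by
          rw [Finset.prod_range_succ, hexp, mul_inv]
          ring
      _ = _ := by
          rw [ih, hfactor, Finset.prod_range_succ, Nat.choose_succ_succ' k 1,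
            Nat.choose_one_right]
          ring

lemma zZero_eq_signProd (hq : q ≠ 0) (hq' : q + q⁻¹ ≠ 0) (hc : c ≠ 0) :
    zZero n q c = signProd (q ^ 4) (pairProd n q c) n := by
  rw [← (isQIdempotentSeq_pairProd hq hq' hc).weightedSum_signWeight (pow_ne_zero 4 hq),
    weightedSum_apply, zZero]
  refine Finset.sum_congr rfl fun J _ => ?_
  have hexp : q ^ (2 * (LJ n J : ℤ) - (ellJ n J : ℤ) * (2 * (n : ℤ) - (ellJ n J : ℤ) + 1)) =
      q ^ (2 * LJ n J) * q ^ (-((ellJ n J : ℤ) * (2 * (n : ℤ) - (ellJ n J : ℤ) + 1))) := by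
    rw [sub_eq_add_neg, zpow_add₀ hq]
    norm_cast
  rw [monoPair_eq_prod_selected, prod_selected_eq_smul (X := pairProd n q c) (fun _ => rfl)
    (fun _ _ => highGen_mul_pairProd_of_lt), smul_smul, prod_pairScale, hexp, signWeight]
  congr 1
  linear_combination (-1) ^ ellJ n J * q ^ (2 * LJ n J) *
    prod_div_mul_zpow (n := n) hq (q * (q + q⁻¹) * c ^ 2) (ellJ n J)

end Expansion

lemma add_inv_ne_zero_of_pow_four_ne_one {K : Type*} [Field K] {q : K} (hq : q ≠ 0)
    (hq4 : q ^ 4 ≠ 1) : q + q⁻¹ ≠ 0 := by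
  intro h
  have hsq : q ^ 2 = -1 := by linear_combination q * h - mul_inv_cancel₀ hq
  exact hq4 (by linear_combination (q ^ 2 - 1) * hsq)

theorem zZero_anticommutes_and_squares_to_one_general (n : ℕ) (q c : ℂ) (hq : q ≠ 0)
    (hq' : q + q⁻¹ ≠ 0) (hc : c ≠ 0) :
    (∀ i : Fin (2 * n), zZero n q c * γ (2 * n) q c i = -(γ (2 * n) q c i * zZero n q c)) ∧
    zZero n q c * zZero n q c = 1 := by
  have hX := isQIdempotentSeq_pairProd (n := n) hq hq' hc
  have hp : IsUnit (q ^ 4) := (pow_ne_zero 4 hq).isUnit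
  rw [zZero_eq_signProd hq hq' hc]
  refine ⟨fun i => ?_, hX.signProd_mul_self hp n⟩
  rcases lt_or_ge i.val n with hi | hi
  · rw [γ_eq_lowGen hi]
    exact hX.signProd_mul_eq_neg_of_left hp hi (fun _ => commute_pairProd_lowGen)
      (fun _ => pairProd_mul_lowGen_of_lt) (lowGen_mul_pairProd i)
      (pairProd_mul_lowGen hq hq' hc hi)
  · rw [γ_eq_highGen hi]
    have hi' : 2 * n - 1 - i < n := by omega
    exact hX.signProd_mul_eq_neg_of_right hp hi' (fun _ => commute_pairProd_highGen)
      (fun _ => highGen_mul_pairProd_of_lt) (pairProd_mul_highGen _)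
      (highGen_mul_pairProd hq hq' hc hi')

/-- `z_0 γ_i = -γ_i z_0` for all `i`, and `z_0² = 1`. -/
theorem zZero_anticommutes_and_squares_to_one (n : ℕ) (hn : 2 ≤ n) (q c : ℂ)
    (hq : q ≠ 0) (hqr : ∀ m : ℕ, 0 < m → q ^ m ≠ 1) (hc : c ≠ 0) :
    (∀ i : Fin (2 * n), zZero n q c * γ (2 * n) q c i = -(γ (2 * n) q c i * zZero n q c)) ∧
    zZero n q c * zZero n q c = 1 :=
  zZero_anticommutes_and_squares_to_one_general n q c hq
    (add_inv_ne_zero_of_pow_four_ne_one hq (hqr 4 (by norm_num))) hc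

end FRT
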